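/- Let d ≥ 1, let r be a real number with 0 ≤ r < 1, and let f ∈ C^r(ℤ_p^d, E). For m ≥ 0 define the locally constant function f_m = Σ_{j ∈ {0,1,…,p^m−1}^d} f(j) · 1_{j + p^m ℤ_p^d}. Then v_{C^r}(f − f_m) → ∞ as m → ∞; in particular the space LC(ℤ_p^d, E) of locally constant functions is dense in C^r(ℤ_p^d, E). -/

import Mathlib

open Filter Topology

/-- `p^{-ε_m(f)}`: the supremum of `‖f (x+y) - f x‖` over `x ∈ ℤ_p^d` and `y ∈ p^m ℤ_p^d`. -/
noncomputable def supDiff {p : ℕ} [Fact p.Prime] (E : Type*) [NormedField E] {d : ℕ}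
    (f : (Fin d → ℤ_[p]) → E) (m : ℕ) : ℝ :=
  ⨆ x : Fin d → ℤ_[p], ⨆ z : Fin d → ℤ_[p], ‖f (x + (p : ℤ_[p]) ^ m • z) - f x‖

/-- `f ∈ C^r(ℤ_p^d, E)`. -/
def MemCr {p : ℕ} [Fact p.Prime] (E : Type*) [NormedField E] {d : ℕ} (r : ℝ)
    (f : (Fin d → ℤ_[p]) → E) : Prop :=
  Continuous f ∧
    Tendsto (fun m : ℕ => supDiff E f m * (p : ℝ) ^ (r * (m : ℝ))) atTop (nhds 0)

/-- The norm `‖f‖_{C^r} = p^{-v_{C^r}(f)}`. -/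
noncomputable def CrNorm {p : ℕ} [Fact p.Prime] (E : Type*) [NormedField E] {d : ℕ} (r : ℝ)
    (f : (Fin d → ℤ_[p]) → E) : ℝ :=
  max (⨆ x : Fin d → ℤ_[p], ‖f x‖) (⨆ m : ℕ, supDiff E f m * (p : ℝ) ^ (r * (m : ℝ)))

/-- The locally constant truncation
`f_m = Σ_{j ∈ {0,…,p^m-1}^d} f(j) · 1_{j + p^m ℤ_p^d}`. -/
noncomputable def truncation {p : ℕ} [Fact p.Prime] (E : Type*) [NormedField E] {d : ℕ}
    (f : (Fin d → ℤ_[p]) → E) (m : ℕ) : (Fin d → ℤ_[p]) → E :=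
  fun x => ∑ j : Fin d → Fin (p ^ m),
    Set.indicator
      {y : Fin d → ℤ_[p] | ∃ z : Fin d → ℤ_[p],
        y = (fun i => ((j i : ℕ) : ℤ_[p])) + (p : ℤ_[p]) ^ m • z}
      (fun _ => f (fun i => ((j i : ℕ) : ℤ_[p]))) x


lemma aux_exists {p : ℕ} [Fact p.Prime] {d : ℕ} (m : ℕ) (x : Fin d → ℤ_[p]) :
    ∃ j : Fin d → Fin (p ^ m), ∃ z : Fin d → ℤ_[p],
      x = (fun i => ((j i : ℕ) : ℤ_[p])) + (p : ℤ_[p]) ^ m • z := by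
  have h : ∀ i, ∃ z : ℤ_[p], x i - ((x i).appr m : ℤ_[p]) = (p : ℤ_[p]) ^ m * z := by
    intro i
    exact Ideal.mem_span_singleton'.1 (PadicInt.appr_spec m (x i)) |>.imp
      (fun z hz => by rw [← hz, mul_comm])
  choose z hz using h
  refine ⟨fun i => ⟨(x i).appr m, PadicInt.appr_lt _ _⟩, z, ?_⟩
  funext i
  have := hz i
  simp only [Pi.add_apply, Pi.smul_apply, smul_eq_mul]
  rw [← this]; ring

lemma aux_unique {p : ℕ} [Fact p.Prime] {d : ℕ} (m : ℕ) (j j' : Fin d → Fin (p ^ m))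
    (z z' : Fin d → ℤ_[p])
    (h : (fun i => ((j i : ℕ) : ℤ_[p])) + (p : ℤ_[p]) ^ m • z =
      (fun i => ((j' i : ℕ) : ℤ_[p])) + (p : ℤ_[p]) ^ m • z') : j = j' := by
  funext i
  have h1 := congrArg (PadicInt.toZModPow m) (congrFun h i)
  have h0 : ((p : ZMod (p ^ m)) ^ m) = 0 := by
    have := ZMod.natCast_self (p ^ m)
    rwa [Nat.cast_pow] at this
  simp only [Pi.add_apply, Pi.smul_apply, smul_eq_mul, map_add, map_mul, map_pow, map_natCast,
    h0, zero_mul, add_zero] at h1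
  rw [ZMod.natCast_eq_natCast_iff'] at h1
  rw [Nat.mod_eq_of_lt (j i).2, Nat.mod_eq_of_lt (j' i).2] at h1
  exact Fin.ext h1

lemma trunc_eq {p : ℕ} [Fact p.Prime] (E : Type*) [NormedField E] {d : ℕ}
    (f : (Fin d → ℤ_[p]) → E) (m : ℕ) (j : Fin d → Fin (p ^ m)) (z : Fin d → ℤ_[p]) :
    truncation E f m ((fun i => ((j i : ℕ) : ℤ_[p])) + (p : ℤ_[p]) ^ m • z) =
      f (fun i => ((j i : ℕ) : ℤ_[p])) := by
  unfold truncation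
  rw [Finset.sum_eq_single j]
  · rw [Set.indicator_of_mem]
    exact ⟨z, rfl⟩
  · intro j' _ hne
    rw [Set.indicator_of_notMem]
    rintro ⟨z', hz'⟩
    exact hne (aux_unique m j j' z z' hz').symm
  · intro h
    exact absurd (Finset.mem_univ _) h

lemma trunc_add {p : ℕ} [Fact p.Prime] (E : Type*) [NormedField E] {d : ℕ}
    (f : (Fin d → ℤ_[p]) → E) (m : ℕ) (x z : Fin d → ℤ_[p]) :
    truncation E f m (x + (p : ℤ_[p]) ^ m • z) = truncation E f m x := by
  obtain ⟨j, z0, rfl⟩ := aux_exists m x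
  rw [add_assoc, ← smul_add, trunc_eq, trunc_eq]

lemma trunc_lc {p : ℕ} [Fact p.Prime] (E : Type*) [NormedField E] {d : ℕ}
    (f : (Fin d → ℤ_[p]) → E) (m : ℕ) : IsLocallyConstant (truncation E f m) := by
  rw [IsLocallyConstant.iff_eventually_eq]
  intro x
  have hp : (0 : ℝ) < p := by exact_mod_cast (Fact.out : p.Prime).pos
  have hpos : (0 : ℝ) < (p : ℝ) ^ (-(m : ℤ)) := zpow_pos hp _
  filter_upwards [Metric.ball_mem_nhds x hpos] with y hy
  have h : ∀ i, ∃ z : ℤ_[p], y i - x i = (p : ℤ_[p]) ^ m * z := by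
    intro i
    have h1 : ‖y i - x i‖ ≤ (p : ℝ) ^ (-(m : ℤ)) := by
      rw [← dist_eq_norm]
      exact (dist_le_pi_dist y x i).trans (Metric.mem_ball.1 hy).le
    rw [PadicInt.norm_le_pow_iff_mem_span_pow] at h1
    exact (Ideal.mem_span_singleton'.1 h1).imp (fun z hz => by rw [← hz, mul_comm])
  choose z hz using h
  have : y = x + (p : ℤ_[p]) ^ m • z := by
    funext i
    simp only [Pi.add_apply, Pi.smul_apply, smul_eq_mul]
    rw [← hz i]; ring
  rw [this, trunc_add]

lemma le_supDiff {p : ℕ} [Fact p.Prime] (E : Type*) [NormedField E] {d : ℕ}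
    (f : (Fin d → ℤ_[p]) → E) (hf : Continuous f) (m : ℕ) (x z : Fin d → ℤ_[p]) :
    ‖f (x + (p : ℤ_[p]) ^ m • z) - f x‖ ≤ supDiff E f m := by
  obtain ⟨C, hC⟩ := isCompact_univ.exists_bound_of_continuousOn (hf.continuousOn (s := Set.univ))
  have hb : ∀ x z : Fin d → ℤ_[p], ‖f (x + (p : ℤ_[p]) ^ m • z) - f x‖ ≤ C + C := fun x z =>
    (norm_sub_le _ _).trans (add_le_add (hC _ trivial) (hC _ trivial))
  have h1 : ‖f (x + (p : ℤ_[p]) ^ m • z) - f x‖ ≤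
      ⨆ z : Fin d → ℤ_[p], ‖f (x + (p : ℤ_[p]) ^ m • z) - f x‖ :=
    le_ciSup (f := fun z => ‖f (x + (p : ℤ_[p]) ^ m • z) - f x‖)
      ⟨C + C, by rintro _ ⟨z, rfl⟩; exact hb x z⟩ z
  refine h1.trans ?_
  exact le_ciSup (f := fun x => ⨆ z : Fin d → ℤ_[p], ‖f (x + (p : ℤ_[p]) ^ m • z) - f x‖)
    ⟨C + C, by rintro _ ⟨x, rfl⟩; exact ciSup_le (hb x)⟩ x

lemma CrNorm_le {p : ℕ} [Fact p.Prime] (E : Type*) [NormedField E] {d : ℕ} (r : ℝ)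
    (g : (Fin d → ℤ_[p]) → E) (B : ℝ) (h1 : ∀ x, ‖g x‖ ≤ B)
    (h2 : ∀ (n : ℕ) (x z : Fin d → ℤ_[p]),
      ‖g (x + (p : ℤ_[p]) ^ n • z) - g x‖ * (p : ℝ) ^ (r * (n : ℝ)) ≤ B) :
    CrNorm E r g ≤ B := by
  have hp : (0 : ℝ) < p := by exact_mod_cast (Fact.out : p.Prime).pos
  refine max_le (ciSup_le h1) (ciSup_le fun n => ?_)
  have hq : (0 : ℝ) < (p : ℝ) ^ (r * (n : ℝ)) := Real.rpow_pos_of_pos hp _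
  rw [← le_div_iff₀ hq]
  exact ciSup_le fun x => ciSup_le fun z => (le_div_iff₀ hq).2 (h2 n x z)

lemma CrNorm_nonneg {p : ℕ} [Fact p.Prime] (E : Type*) [NormedField E] {d : ℕ} (r : ℝ)
    (g : (Fin d → ℤ_[p]) → E) : 0 ≤ CrNorm E r g :=
  le_max_of_le_left (Real.iSup_nonneg fun _ => norm_nonneg _)

/-- For `d ≥ 1`, `0 ≤ r < 1` and `f ∈ C^r(ℤ_p^d, E)`, the locally constant
truncations `f_m = Σ_j f(j)·1_{j + p^m ℤ_p^d}` satisfy `v_{C^r}(f - f_m) → ∞`, i.e.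
`‖f - f_m‖_{C^r} → 0`; in particular the locally constant functions are dense in
`C^r(ℤ_p^d, E)`. -/
theorem stmt3 (p : ℕ) [Fact p.Prime] (E : Type*) [NormedField E] [CompleteSpace E]
    [IsUltrametricDist E] [Algebra ℚ_[p] E] [FiniteDimensional ℚ_[p] E]
    (hE : ∀ x : ℚ_[p], ‖algebraMap ℚ_[p] E x‖ = ‖x‖)
    (d : ℕ) (hd : 1 ≤ d) (r : ℝ) (hr0 : 0 ≤ r) (hr1 : r < 1)
    (f : (Fin d → ℤ_[p]) → E) (hf : MemCr E r f) :
    Tendsto (fun m : ℕ => CrNorm E r (f - truncation E f m)) atTop (nhds 0) ∧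
    ∀ ε : ℝ, 0 < ε → ∃ g : (Fin d → ℤ_[p]) → E,
      IsLocallyConstant g ∧ CrNorm E r (f - g) < ε := by
  have hp1 : (1 : ℝ) ≤ p := by exact_mod_cast (Fact.out : p.Prime).one_lt.le
  have hp : (0 : ℝ) < p := by linarith
  obtain ⟨hc, ht⟩ := hf
  have main : Tendsto (fun m : ℕ => CrNorm E r (f - truncation E f m)) atTop (nhds 0) := by
    rw [Metric.tendsto_atTop] at ht ⊢
    intro ε hε
    obtain ⟨N, hN⟩ := ht (ε / 2) (half_pos hε)
    refine ⟨N, fun m hm => ?_⟩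
    rw [Real.dist_0_eq_abs, abs_of_nonneg (CrNorm_nonneg E r _)]
    refine lt_of_le_of_lt ?_ (half_lt_self hε)
    have hN' : ∀ n, m ≤ n → supDiff E f n * (p : ℝ) ^ (r * (n : ℝ)) ≤ ε / 2 := by
      intro n hn
      have := hN n (hm.trans hn)
      rw [Real.dist_0_eq_abs] at this
      exact (le_abs_self _).trans this.le
    have hS0 : 0 ≤ supDiff E f m := (norm_nonneg _).trans (le_supDiff E f hc m 0 0)
    have hg : ∀ x, ‖(f - truncation E f m) x‖ ≤ supDiff E f m := by
      intro x
      obtain ⟨j, z, rfl⟩ := aux_exists m x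
      rw [Pi.sub_apply, trunc_eq]
      exact le_supDiff E f hc m _ z
    refine CrNorm_le E r _ _ (fun x => ?_) (fun n x z => ?_)
    · refine (hg x).trans (le_trans ?_ (hN' m le_rfl))
      exact le_mul_of_one_le_right hS0 (Real.one_le_rpow hp1 (by positivity))
    · rcases le_total m n with hmn | hnm
      · refine le_trans ?_ (hN' n hmn)
        refine mul_le_mul_of_nonneg_right ?_ (by positivity)
        have e : truncation E f m (x + (p : ℤ_[p]) ^ n • z) = truncation E f m x := by
          obtain ⟨k, rfl⟩ := Nat.exists_eq_add_of_le hmn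
          rw [pow_add, mul_smul, trunc_add]
        rw [Pi.sub_apply, Pi.sub_apply, e, sub_sub_sub_cancel_right]
        exact le_supDiff E f hc n x z
      · refine le_trans ?_ (hN' m le_rfl)
        refine mul_le_mul ?_ ?_ (by positivity) hS0
        · rw [sub_eq_add_neg]
          exact (IsUltrametricDist.norm_add_le_max _ _).trans
            (max_le (hg _) ((norm_neg _).le.trans (hg _)))
        · refine Real.rpow_le_rpow_of_exponent_le hp1 (mul_le_mul_of_nonneg_left ?_ hr0)
          exact_mod_cast hnm
  refine ⟨main, fun ε hε => ?_⟩
  obtain ⟨m, hm⟩ := (main.eventually (gt_mem_nhds hε)).exists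
  exact ⟨truncation E f m, trunc_lc E f m, hm⟩
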